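/- For every integer r ≥ 20, p_{r+1}^{r-π(r)} > 2^{p_{r+1}}, where p_n denotes the n-th prime and π is the prime-counting function. -/

import Mathlib

/-!
Since `x ↦ log x / x` decreases for `x ≥ e`, an inequality `2 ^ z < z ^ m` persists when `z` is
lowered. Hence for small `n` a short chain of pairs `(y, z)` with `2 ^ z < z ^ (π y - π (π y))`
suffices, each of which settles all `n` with `y < n ≤ z`.

For large `n`, sieving by `2, 3, 5, 7` gives `π (π' n) ≤ (8 / 35) * π' n + O(1)`, where `π' n`
counts the primes below `n`. It is then enough that `π' n` is asymptotically at least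
`c * n / log n` for some `c > (35 / 27) * log 2 = 1.296… * log 2`. The central binomial coefficient
only yields `c = log 2`, but Chebyshev's quotient `n! (n/30)! / ((n/2)! (n/3)! (n/5)!)` yields
`c = 0.921… = 1.329… * log 2`.
-/

open Real
open scoped Nat Nat.Prime

theorem prime_iff_coprime_factorial_sqrt {n : ℕ} : n.Prime ↔ 2 ≤ n ∧ n.Coprime n.sqrt ! := by
  refine ⟨fun hp ↦ ⟨hp.two_le, hp.coprime_factorial_of_lt (Nat.sqrt_lt_self hp.one_lt)⟩, ?_⟩
  rintro ⟨htwo, hcoprime⟩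
  by_contra hp
  have hle : n.minFac ≤ n.sqrt := Nat.le_sqrt'.mpr (Nat.minFac_sq_le_self (by omega) hp)
  exact hle.not_gt ((Nat.coprime_factorial_iff (by omega)).mp hcoprime)

/-- The predicate on the right is decided by a single `gcd`, so that the kernel can evaluate the
count. -/
theorem primeCounting'_eq_count_coprime (n : ℕ) :
    π' n = Nat.count (fun m ↦ 2 ≤ m ∧ m.Coprime m.sqrt !) n := by
  simp only [Nat.primeCounting', Nat.count_eq_card_filter_range, prime_iff_coprime_factorial_sqrt]

theorem primeCounting'_succ_le (n : ℕ) : π' (n + 1) ≤ π' n + 1 := by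
  rw [Nat.primeCounting', Nat.count_succ]
  split_ifs <;> simp

theorem monotone_sub_primeCounting : Monotone fun n ↦ n - π n := by
  refine monotone_nat_of_le_succ fun n ↦ ?_
  have hsucc : π (n + 1) ≤ π n + 1 := primeCounting'_succ_le (n + 1)
  omega

theorem primeCounting'_add_le_add_totient {a k : ℕ} (hk : ∀ p, p.Prime → p ∣ a → p < k) :
    π' (k + a) ≤ π' k + φ a := by
  rw [Nat.primeCounting', Nat.count_add, add_le_add_iff_left, Nat.count_eq_card_filter_range,
    ← Nat.filter_coprime_Ico_eq_totient a k]
  refine Finset.card_le_card_of_injOn (k + ·) (fun i hi ↦ ?_) (add_right_injective k).injOn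
  simp only [Finset.coe_filter, Finset.mem_range, Set.mem_ofPred_eq, Finset.mem_Ico] at hi ⊢
  refine ⟨by omega, Nat.coprime_comm.mp <| hi.2.coprime_iff_not_dvd.mpr fun hdvd ↦ ?_⟩
  have := hk _ hi.2 hdvd
  omega

theorem thirtyFive_mul_primeCounting_le (n : ℕ) : 35 * π n ≤ 8 * n + 151 := by
  induction n using Nat.strong_induction_on with
  | _ n ih =>
    rcases lt_or_ge n 217 with hn | hn
    · have hsmall : ∀ s < 217, 35 * π s ≤ 8 * s + 151 := by
        simp only [Nat.primeCounting, primeCounting'_eq_count_coprime]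
        decide +kernel
      exact hsmall n hn
    · have hprime : ∀ p, p.Prime → p ∣ 210 → p < n - 210 + 1 := fun p hp hdvd ↦ by
        have hmem : p ∈ Nat.primeFactorsList 210 :=
          (Nat.mem_primeFactorsList (by norm_num)).mpr ⟨hp, hdvd⟩
        simp only [Nat.primeFactorsList_ofNat, List.mem_cons, List.not_mem_nil, or_false] at hmem
        omega
      have htotient : φ 210 = 48 := by rfl
      have hsieve := primeCounting'_add_le_add_totient hprime
      rw [htotient, show n - 210 + 1 + 210 = n + 1 by omega] at hsieve
      change π n ≤ π (n - 210) + 48 at hsieve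
      have := ih (n - 210) (by omega)
      omega

theorem pow_lt_pow_iff_mul_log_lt_mul_log {a b : ℝ} (ha : 0 < a) (hb : 0 < b) {m n : ℕ} :
    a ^ m < b ^ n ↔ m * log a < n * log b := by
  rw [← log_pow, ← log_pow, log_lt_log_iff (by positivity) (by positivity)]

theorem mul_log_le_mul_log {x y : ℝ} (hx : exp 1 ≤ x) (hxy : x ≤ y) :
    x * log y ≤ y * log x := by
  have hx0 : 0 < x := (exp_pos 1).trans_le hx
  have hanti := log_div_self_antitoneOn hx (hx.trans hxy) hxy
  rw [div_le_div_iff₀ (hx0.trans_le hxy) hx0] at hanti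
  linarith

theorem pow_lt_pow_of_pow_lt_pow_of_le {b : ℝ} (hb : 0 < b) {x y m : ℕ} (hx : 3 ≤ x) (hxy : x ≤ y)
    (h : b ^ y < (y : ℝ) ^ m) : b ^ x < (x : ℝ) ^ m := by
  have hx' : (3 : ℝ) ≤ x := by exact_mod_cast hx
  have hxy' : (x : ℝ) ≤ y := by exact_mod_cast hxy
  have hy0 : (0 : ℝ) < y := by linarith
  rw [pow_lt_pow_iff_mul_log_lt_mul_log hb hy0] at h
  rw [pow_lt_pow_iff_mul_log_lt_mul_log hb (by linarith)]
  refine lt_of_mul_lt_mul_left ?_ hy0.le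
  calc y * (x * log b) = x * (y * log b) := by ring
    _ < x * (m * log y) := by gcongr
    _ = m * (x * log y) := by ring
    _ ≤ m * (y * log x) :=
      mul_le_mul_of_nonneg_left (mul_log_le_mul_log (by linarith [exp_one_lt_three]) hxy')
        m.cast_nonneg
    _ = y * (m * log x) := by ring

theorem monotoneOn_mul_log_sub_self : MonotoneOn (fun x ↦ x * log x - x) (Set.Ici 1) := by
  intro x hx y hy hxy
  have hx0 : 0 < x := zero_lt_one.trans_le hx
  have hy0 : 0 < y := zero_lt_one.trans_le hy
  have hlog : log x - log y ≤ x / y - 1 := by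
    rw [← log_div hx0.ne' hy0.ne']
    exact log_le_sub_one_of_pos (by positivity)
  have hmul : y * (log x - log y) ≤ x - y := by
    calc y * (log x - log y) ≤ y * (x / y - 1) := by gcongr
      _ = x - y := by field_simp
  have hnonneg : 0 ≤ (y - x) * log x := mul_nonneg (sub_nonneg.mpr hxy) (log_nonneg hx)
  dsimp only
  linarith

theorem mul_log_sub_add_le_log_factorial {n : ℕ} (hn : n ≠ 0) :
    n * log n - n + log n / 2 ≤ log n ! := by
  have hpi : 0 ≤ log (2 * Real.pi) := log_nonneg (by linarith [pi_gt_three])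
  linarith [Stirling.le_log_factorial_stirling hn]

theorem log_factorial_le {n : ℕ} (hn : n ≠ 0) :
    log n ! ≤ n * log n - n + log n / 2 + 1 := by
  obtain ⟨k, rfl⟩ := Nat.exists_eq_succ_of_ne_zero hn
  have hanti := Stirling.log_stirlingSeq'_antitone k.zero_le
  have hk : ((k.succ : ℕ) : ℝ) ≠ 0 := by positivity
  simp only [Function.comp_apply, Stirling.log_stirlingSeq_formula] at hanti
  rw [log_mul two_ne_zero hk, log_div hk (exp_ne_zero 1), log_exp] at hanti
  simp only [Nat.succ_eq_add_one, one_div, Nat.cast_one, zero_add, Nat.factorial_one, log_one,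
    mul_one, zero_sub, log_inv, log_exp, mul_neg, sub_neg_eq_add] at hanti
  push_cast at hanti ⊢
  linarith

theorem log_factorial_floor_le {x : ℝ} (hx : 1 ≤ x) :
    log ⌊x⌋₊ ! ≤ x * log x - x + log x / 2 + 1 := by
  have hfloor : (1 : ℝ) ≤ ⌊x⌋₊ := by exact_mod_cast Nat.one_le_floor_iff x |>.mpr hx
  have hle : (⌊x⌋₊ : ℝ) ≤ x := Nat.floor_le (by linarith)
  have hmono := monotoneOn_mul_log_sub_self hfloor hx hle
  have hlog : log ⌊x⌋₊ ≤ log x := log_le_log (by linarith) hle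
  have hfac := log_factorial_le (Nat.floor_pos.mpr hx).ne'
  dsimp only at hmono
  linarith

theorem le_log_factorial_floor {x : ℝ} (hx : 1 ≤ x) :
    x * log x - x - log (x + 1) / 2 ≤ log ⌊x⌋₊ ! := by
  have hlt : x ≤ ⌊x⌋₊ + 1 := (Nat.lt_floor_add_one x).le
  have hmono := monotoneOn_mul_log_sub_self hx (hx.trans hlt) hlt
  have hlog : log (⌊x⌋₊ + 1) ≤ log (x + 1) :=
    log_le_log (by positivity) (by linarith [Nat.floor_le (zero_le_one.trans hx)])
  have hfac := mul_log_sub_add_le_log_factorial ⌊x⌋₊.succ_ne_zero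
  rw [Nat.factorial_succ, Nat.cast_mul, log_mul (by positivity) (by positivity)] at hfac
  push_cast at hfac
  dsimp only at hmono
  linarith

theorem log_thirty : log 30 = log 2 + log 3 + log 5 := by
  rw [← log_mul (by norm_num) (by norm_num), ← log_mul (by norm_num) (by norm_num)]
  norm_num

/-- The constant `log (2 ^ (1 / 2) * 3 ^ (1 / 3) * 5 ^ (1 / 5) / 30 ^ (1 / 30)) = 0.92129…` of
Chebyshev's lower bound for `ψ`. -/
noncomputable def chebyshevConstant : ℝ :=
  log 2 / 2 + log 3 / 3 + log 5 / 5 - log 30 / 30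

theorem mul_log_two_le_chebyshevConstant : 93 / 70 * log 2 ≤ chebyshevConstant := by
  -- `19 / 12` and `65 / 28` approximate `log₂ 3` and `log₂ 5` from below.
  have hthree : ((19 : ℕ) : ℝ) * log 2 < (12 : ℕ) * log 3 :=
    (pow_lt_pow_iff_mul_log_lt_mul_log (by norm_num) (by norm_num)).mp (by norm_num)
  have hfive : ((65 : ℕ) : ℝ) * log 2 < (28 : ℕ) * log 5 :=
    (pow_lt_pow_iff_mul_log_lt_mul_log (by norm_num) (by norm_num)).mp (by norm_num)
  rw [chebyshevConstant, log_thirty]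
  push_cast at hthree hfive
  linarith

theorem factorial_mul_factorial_dvd_mul_lcmUpto (n : ℕ) :
    n ! * (n / 30)! ∣ (n / 2)! * (n / 3)! * (n / 5)! * n.lcmUpto := by
  have hfac (m : ℕ) : m ! ≠ 0 := m.factorial_ne_zero
  have hlcm : n.lcmUpto ≠ 0 := n.lcmUpto_ne_zero
  refine (Nat.factorization_prime_le_iff_dvd (by simp [hfac]) (by simp [hfac, hlcm])).mp
    fun p hp ↦ ?_
  have legendre (d : ℕ) :
      (n / d)!.factorization p = ∑ i ∈ Finset.Ico 1 (Nat.log p n + 1), n / p ^ i / d := by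
    rw [Nat.factorization_factorial hp
      (Nat.lt_succ_of_le (Nat.log_mono_right (Nat.div_le_self n d)))]
    simp only [Nat.div_right_comm]
  have hlcm_fac :
      n.lcmUpto.factorization p = ∑ i ∈ Finset.Ico 1 (Nat.log p n + 1), 1 := by
    simp [Nat.factorization_lcmUpto n hp]
  have hn := legendre 1
  simp only [Nat.div_one] at hn
  rw [Nat.factorization_mul (hfac _) (hfac _), Nat.factorization_mul (by simp [hfac]) hlcm,
    Nat.factorization_mul (by simp [hfac]) (hfac _), Nat.factorization_mul (hfac _) (hfac _)]
  simp only [Finsupp.add_apply, hn, legendre, hlcm_fac, ← Finset.sum_add_distrib]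
  -- Chebyshev: `⌊x⌋ + ⌊x / 30⌋ ≤ ⌊x / 2⌋ + ⌊x / 3⌋ + ⌊x / 5⌋ + 1`, at `x = n / p ^ i`.
  exact Finset.sum_le_sum fun i _ ↦ by omega

theorem log_factorial_add_log_factorial_le_psi (n : ℕ) :
    log n ! + log (n / 30)! ≤
      log (n / 2)! + log (n / 3)! + log (n / 5)! + Chebyshev.psi n := by
  have hfac (m : ℕ) : (m ! : ℝ) ≠ 0 := by positivity
  have hlcm : (n.lcmUpto : ℝ) ≠ 0 := by exact_mod_cast n.lcmUpto_ne_zero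
  rw [Chebyshev.psi_eq_log_lcmUpto, ← log_mul (hfac _) (hfac _), ← log_mul (hfac _) (hfac _),
    ← log_mul (by simp [hfac]) (hfac _), ← log_mul (by simp [hfac]) hlcm]
  refine log_le_log (by positivity) ?_
  have hpos : 0 < (n / 2)! * (n / 3)! * (n / 5)! * n.lcmUpto := by
    have := n.lcmUpto_pos
    positivity
  exact_mod_cast Nat.le_of_dvd hpos (factorial_mul_factorial_dvd_mul_lcmUpto n)

theorem chebyshevConstant_mul_sub_le_psi {n : ℕ} (hn : 30 ≤ n) :
    chebyshevConstant * n - 2 * log n ≤ Chebyshev.psi n := by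
  have hn' : (30 : ℝ) ≤ n := by exact_mod_cast hn
  have hn0 : (n : ℝ) ≠ 0 := by positivity
  have hfloor (d : ℕ) : ⌊(n : ℝ) / d⌋₊ = n / d := Nat.floor_div_eq_div n d
  have h1 := mul_log_sub_add_le_log_factorial (n := n) (by omega)
  have h30 := le_log_factorial_floor (x := n / (30 : ℕ)) (by push_cast; linarith)
  have h2 := log_factorial_floor_le (x := n / (2 : ℕ)) (by push_cast; linarith)
  have h3 := log_factorial_floor_le (x := n / (3 : ℕ)) (by push_cast; linarith)
  have h5 := log_factorial_floor_le (x := n / (5 : ℕ)) (by push_cast; linarith)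
  simp only [hfloor] at h30 h2 h3 h5
  push_cast at h30 h2 h3 h5
  have hlog : log (n / 30 + 1 : ℝ) ≤ log n := log_le_log (by positivity) (by linarith)
  have hlog_thirty : 3 ≤ log 30 := by
    rw [le_log_iff_exp_le (by norm_num)]
    calc exp 3 = exp 1 ^ 3 := by simp
      _ ≤ 3 ^ 3 := by gcongr; exact exp_one_lt_three.le
      _ ≤ 30 := by norm_num
  have hlog_mono : log 30 ≤ log n := log_le_log (by norm_num) hn'
  rw [log_div hn0 (by norm_num)] at h30 h2 h3 h5
  rw [chebyshevConstant]
  linarith [log_factorial_add_log_factorial_le_psi n, log_thirty]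

theorem le_primeCounting'_mul_log {n : ℕ} (hn : 30 ≤ n) :
    93 / 70 * log 2 * n - 3 * log n ≤ π' n * log n := by
  have hconst := mul_le_mul_of_nonneg_right mul_log_two_le_chebyshevConstant n.cast_nonneg
  have hsucc : (π n : ℝ) ≤ π' n + 1 := by
    exact_mod_cast primeCounting'_succ_le n
  have hlog : π n * log n ≤ (π' n + 1) * log n :=
    mul_le_mul_of_nonneg_right hsucc (log_natCast_nonneg n)
  linarith [chebyshevConstant_mul_sub_le_psi hn, Chebyshev.psi_le_primeCounting_mul_log n]

theorem exists_rel_of_isChain {α : Type*} [LinearOrder α] {R : α → α → Prop} {a b x : α}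
    {l : List α} (hl : (a :: l).IsChain R) (hb : b ∈ l) (hax : a < x) (hxb : x ≤ b) :
    ∃ y z, R y z ∧ y < x ∧ x ≤ z := by
  induction l generalizing a with
  | nil => simp at hb
  | cons c l ih =>
    rw [List.isChain_cons_cons] at hl
    rcases le_or_gt x c with hxc | hcx
    · exact ⟨a, c, hl.1, hax, hxc⟩
    · have hbc : b ≠ c := (hcx.trans_le hxb).ne'
      exact ih hl.2 (List.mem_of_ne_of_mem hbc hb) hcx

theorem two_pow_lt_pow_primeCounting'_sub_of_lt_of_le {y n z : ℕ}
    (h : 2 ^ z < z ^ (π y - π (π y))) (hn : 3 ≤ n) (hyn : y < n) (hnz : n ≤ z) :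
    2 ^ n < n ^ (π' n - π (π' n)) := by
  have hexp : π y - π (π y) ≤ π' n - π (π' n) :=
    monotone_sub_primeCounting (Nat.monotone_primeCounting' hyn)
  have hbase : 2 ^ n < n ^ (π y - π (π y)) := by
    exact_mod_cast pow_lt_pow_of_pow_lt_pow_of_le two_pos hn hnz (by exact_mod_cast h)
  exact hbase.trans_le (Nat.pow_le_pow_right (by omega) hexp)

theorem two_pow_lt_pow_primeCounting'_sub_of_le {n : ℕ} (hn : 72 ≤ n) (hn' : n ≤ 4096) :
    2 ^ n < n ^ (π' n - π (π' n)) := by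
  -- Each entry but the last is the largest `z` that its predecessor `y` allows.
  have hchain : [71, 74, 82, 91, 99, 108, 134, 152, 189, 226, 265, 335, 417, 523, 699, 937, 1255,
      1694, 2326, 3215, 4096].IsChain fun y z ↦ 2 ^ z < z ^ (π y - π (π y)) := by
    simp only [Nat.primeCounting, primeCounting'_eq_count_coprime]
    decide +kernel
  obtain ⟨y, z, h, hyn, hnz⟩ :=
    exists_rel_of_isChain hchain (b := 4096) (by simp) (by omega) hn'
  exact two_pow_lt_pow_primeCounting'_sub_of_lt_of_le h (by omega) hyn hnz

theorem two_pow_lt_pow_primeCounting'_sub_of_ge {n : ℕ} (hn : 4096 ≤ n) :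
    2 ^ n < n ^ (π' n - π (π' n)) := by
  have hn' : (4096 : ℝ) ≤ n := by exact_mod_cast hn
  have hn0 : (0 : ℝ) < n := by linarith
  have hlog : log n ≤ 3 / 1024 * (log 2 * n) := by
    have hmono := mul_log_le_mul_log (by linarith [exp_one_lt_three]) hn'
    rw [show (4096 : ℝ) = 2 ^ 12 by norm_num, log_pow] at hmono
    push_cast at hmono
    linarith
  have hsieve : (27 * π' n - 151) / 35 ≤ ((π' n - π (π' n) : ℕ) : ℝ) := by
    have hle : (35 * π (π' n) : ℝ) ≤ 8 * π' n + 151 := by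
      exact_mod_cast thirtyFive_mul_primeCounting_le (π' n)
    have hsub : (π' n : ℝ) ≤ (π' n - π (π' n) : ℕ) + π (π' n) := by
      exact_mod_cast le_tsub_add
    linarith
  suffices n * log 2 < (π' n - π (π' n) : ℕ) * log n by
    exact_mod_cast (pow_lt_pow_iff_mul_log_lt_mul_log two_pos hn0).mpr this
  have hpos : 0 < log 2 * n := by positivity
  calc n * log 2 < 27 / 35 * (93 / 70 * log 2 * n - 3 * log n) - 151 / 35 * log n := by linarith
    _ ≤ 27 / 35 * (π' n * log n) - 151 / 35 * log n := by
      gcongr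
      exact le_primeCounting'_mul_log (by omega)
    _ = (27 * π' n - 151) / 35 * log n := by ring
    _ ≤ (π' n - π (π' n) : ℕ) * log n := by gcongr

theorem stmt_0_general {n : ℕ} (hn : 72 ≤ n) : 2 ^ n < n ^ (π' n - π (π' n)) := by
  rcases le_total n 4096 with hle | hge
  · exact two_pow_lt_pow_primeCounting'_sub_of_le hn hle
  · exact two_pow_lt_pow_primeCounting'_sub_of_ge hge

/-- For every integer r ≥ 20, p_{r+1}^{r-π(r)} > 2^{p_{r+1}},
where `Nat.nth Nat.Prime` is 0-indexed (so `Nat.nth Nat.Prime r` is the (r+1)-th prime)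
and `Nat.primeCounting` is the prime-counting function π. -/
theorem stmt_0 (r : ℕ) (hr : 20 ≤ r) :
    (Nat.nth Nat.Prime r) ^ (r - Nat.primeCounting r) > 2 ^ (Nat.nth Nat.Prime r) := by
  have hcount : π' 72 ≤ r := by
    rw [primeCounting'_eq_count_coprime]
    exact le_trans (by decide +kernel) hr
  have hnth : 72 ≤ Nat.nth Nat.Prime r :=
    (Nat.count_le_iff_le_nth Nat.infinite_setOfPred_prime).mp hcount
  simpa only [Nat.primeCounting'_nth_eq] using stmt_0_general hnth
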